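/- arXiv:2405.07739 — 5 statements merged into one kernel-verified Lean document; each statement's English description precedes it below -/
import Mathlib

section
/- The function f : ℂ^{p×q} → ℝ, f(H) = min_{x∈ℂⁿ} h(H,x), is Fréchet differentiable at every H (viewing ℂ^{p×q} as a real inner product space with inner product Re tr(AᴴB)), and its gradient at H equals G(H) = βH − β𝓗(𝓛(𝓟_Ω s + β𝓗*H)); that is, f(H + Δ) − f(H) − Re tr(G(H)ᴴ Δ) = o(‖Δ‖_F) as Δ → 0. -/
open scoped BigOperators

namespace LPPG

/-- The Hankel operator. -/
noncomputable def hankel (p q n : ℕ) (hn : p + q = n + 1) (x : Fin n → ℂ) :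
    Matrix (Fin p) (Fin q) ℂ :=
  fun i j => x ⟨i.1 + j.1, by have hi := i.2; have hj := j.2; omega⟩

/-- The adjoint `𝓗*` of the Hankel operator. -/
noncomputable def hankelAdj (p q n : ℕ) (X : Matrix (Fin p) (Fin q) ℂ) : Fin n → ℂ :=
  fun a => ∑ i : Fin p, ∑ j : Fin q, if (i : ℕ) + (j : ℕ) = (a : ℕ) then X i j else 0

/-- The antidiagonal count `w_a`. -/
def w (p q : ℕ) (a : ℕ) : ℕ :=
  (Finset.univ.filter (fun ij : Fin p × Fin q => (ij.1 : ℕ) + (ij.2 : ℕ) = a)).card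

/-- The sampling operator `𝓟_Ω`. -/
def projOmega (n : ℕ) (Ω : Finset (Fin n)) (x : Fin n → ℂ) : Fin n → ℂ :=
  fun a => if a ∈ Ω then x a else 0

/-- The entrywise operator `𝓛`. -/
noncomputable def Lop (p q n : ℕ) (α β : ℝ) (Ω : Finset (Fin n)) (x : Fin n → ℂ) : Fin n → ℂ :=
  fun a => x a / ((α : ℂ) + (if a ∈ Ω then 1 else 0) + (β : ℂ) * (w p q (a : ℕ) : ℂ))

/-- `h(H, x)`. -/
noncomputable def hfun (p q n : ℕ) (hn : p + q = n + 1) (α β : ℝ) (Ω : Finset (Fin n))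
    (s : Fin n → ℂ) (H : Matrix (Fin p) (Fin q) ℂ) (x : Fin n → ℂ) : ℝ :=
  (1 / 2) * ∑ a : Fin n, ‖s a - projOmega n Ω x a‖ ^ 2
    + (β / 2) * ∑ i : Fin p, ∑ j : Fin q, ‖(H - hankel p q n hn x) i j‖ ^ 2
    + (α / 2) * ∑ a : Fin n, ‖x a‖ ^ 2

/-- `f(H) = min_x h(H,x)`. -/
noncomputable def fobj (p q n : ℕ) (hn : p + q = n + 1) (α β : ℝ) (Ω : Finset (Fin n))
    (s : Fin n → ℂ) (H : Matrix (Fin p) (Fin q) ℂ) : ℝ :=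
  ⨅ x : Fin n → ℂ, hfun p q n hn α β Ω s H x

/-- Frobenius norm of a complex matrix. -/
noncomputable def frobNorm (p q : ℕ) (A : Matrix (Fin p) (Fin q) ℂ) : ℝ :=
  Real.sqrt (∑ i : Fin p, ∑ j : Fin q, ‖A i j‖ ^ 2)

/-- Real Frobenius inner product `Re tr(Aᴴ B)`. -/
noncomputable def frobInner (p q : ℕ) (A B : Matrix (Fin p) (Fin q) ℂ) : ℝ :=
  (∑ i : Fin p, ∑ j : Fin q, (starRingEnd ℂ) (A i j) * B i j).re

/-- The gradient map `G(H) = βH − β𝓗(𝓛(𝓟_Ω s + β𝓗*H))`. -/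
noncomputable def Gmap (p q n : ℕ) (hn : p + q = n + 1) (α β : ℝ) (Ω : Finset (Fin n))
    (s : Fin n → ℂ) (H : Matrix (Fin p) (Fin q) ℂ) : Matrix (Fin p) (Fin q) ℂ :=
  β • H - β • hankel p q n hn (Lop p q n α β Ω (projOmega n Ω s + β • hankelAdj p q n H))

/-!
The objective `h` is quadratic and, at the solution `x` of the normal equation
`(α + χ_Ω + β w) x = 𝓟_Ω s + β 𝓗* H`, its derivative in the second variable vanishes. Hence
`h(H + Δ, x + y) = h(H, x) + β ⟪H - 𝓗 x, Δ⟫ + h₀(Δ, y)`, where `h₀ ≥ 0` is `h` with `s = 0`.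
Taking the infimum over `y` and comparing with `y = 0` traps the remainder
`f(H + Δ) - f(H) - β ⟪H - 𝓗 x, Δ⟫` between `0` and `(β / 2) ‖Δ‖²`.
-/

open scoped InnerProductSpace

section MarginalMinimization

open Asymptotics

lemma hasGradientAt_of_abs_sub_le_mul_norm_sq {F : Type*} [NormedAddCommGroup F]
    [InnerProductSpace ℝ F] [CompleteSpace F] {f : F → ℝ} {g u : F} {C : ℝ}
    (hf : ∀ v, |f (u + v) - f u - ⟪g, v⟫_ℝ| ≤ C * ‖v‖ ^ 2) : HasGradientAt f g u := by
  rw [hasGradientAt_iff_isLittleO_nhds_zero]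
  have remainder_isBigO :
      (fun v => f (u + v) - f u - ⟪g, v⟫_ℝ) =O[nhds 0] fun v => ‖v‖ ^ 2 :=
    .of_bound C (.of_forall fun v => by simpa using hf v)
  exact remainder_isBigO.trans_isLittleO (isLittleO_norm_pow_id one_lt_two)

lemma hasGradientAt_iInf_of_bounds {F X : Type*} [NormedAddCommGroup F] [InnerProductSpace ℝ F]
    [CompleteSpace F] {J : F → X → ℝ} {g u : F} {x₀ : X} {C : ℝ}
    (lower : ∀ v x, J u x₀ + ⟪g, v⟫_ℝ ≤ J (u + v) x)
    (upper : ∀ v, J (u + v) x₀ ≤ J u x₀ + ⟪g, v⟫_ℝ + C * ‖v‖ ^ 2) :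
    HasGradientAt (fun v => ⨅ x, J v x) g u := by
  have : Nonempty X := ⟨x₀⟩
  have le_iInf (v : F) : J u x₀ + ⟪g, v⟫_ℝ ≤ ⨅ x, J (u + v) x := le_ciInf (lower v)
  have iInf_le (v : F) : ⨅ x, J (u + v) x ≤ J (u + v) x₀ :=
    ciInf_le ⟨_, Set.forall_mem_range.2 (lower v)⟩ x₀
  have iInf_eq : ⨅ x, J u x = J u x₀ :=
    le_antisymm (by simpa using iInf_le 0) (by simpa using le_iInf 0)
  refine hasGradientAt_of_abs_sub_le_mul_norm_sq (C := C) fun v => ?_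
  rw [iInf_eq, abs_of_nonneg (by linarith [le_iInf v])]
  linarith [iInf_le v, upper v]

end MarginalMinimization

section RegularizedLeastSquares

variable {E F G : Type*} [NormedAddCommGroup E] [InnerProductSpace ℝ E]
  [NormedAddCommGroup F] [InnerProductSpace ℝ F] [NormedAddCommGroup G] [InnerProductSpace ℝ G]
  {P : E →ₗ[ℝ] G} {T : E →ₗ[ℝ] F} {α β : ℝ} {s : G} {u : F} {x : E}

/-- The Tikhonov-regularized least-squares objective with data term `P`, coupling term `T` and
weights `α`, `β`; the coordinate-free form of `hfun`. -/
noncomputable def leastSquares (P : E →ₗ[ℝ] G) (T : E →ₗ[ℝ] F) (α β : ℝ) (s : G) (u : F)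
    (x : E) : ℝ :=
  (1 / 2) * ‖s - P x‖ ^ 2 + (β / 2) * ‖u - T x‖ ^ 2 + (α / 2) * ‖x‖ ^ 2

lemma leastSquares_nonneg (hα : 0 ≤ α) (hβ : 0 ≤ β) : 0 ≤ leastSquares P T α β s u x := by
  unfold leastSquares
  positivity

lemma leastSquares_zero_right (v : F) : leastSquares P T α β 0 v 0 = β / 2 * ‖v‖ ^ 2 := by
  simp [leastSquares]

/-- Stationarity of `leastSquares P T α β s u` at `x`, in weak form. -/
def IsLeastSquaresStationary (P : E →ₗ[ℝ] G) (T : E →ₗ[ℝ] F) (α β : ℝ) (s : G) (u : F)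
    (x : E) : Prop :=
  ∀ y, α * ⟪x, y⟫_ℝ = ⟪s - P x, P y⟫_ℝ + β * ⟪u - T x, T y⟫_ℝ

lemma IsLeastSquaresStationary.leastSquares_add_add
    (hx : IsLeastSquaresStationary P T α β s u x) (v : F) (y : E) :
    leastSquares P T α β s (u + v) (x + y) =
      leastSquares P T α β s u x + ⟪β • (u - T x), v⟫_ℝ + leastSquares P T α β 0 v y := by
  have data_residual : s - P (x + y) = (s - P x) + (0 - P y) := by rw [map_add]; abel
  have coupling_residual : u + v - T (x + y) = (u - T x) + (v - T y) := by rw [map_add]; abel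
  unfold leastSquares
  rw [data_residual, coupling_residual, norm_add_sq_real, norm_add_sq_real, norm_add_sq_real,
    zero_sub, inner_neg_right, inner_sub_right _ v, real_inner_smul_left]
  linear_combination hx y

theorem IsLeastSquaresStationary.hasGradientAt_iInf [CompleteSpace F]
    (hx : IsLeastSquaresStationary P T α β s u x) (hα : 0 ≤ α) (hβ : 0 ≤ β) :
    HasGradientAt (fun v => ⨅ y, leastSquares P T α β s v y) (β • (u - T x)) u := by
  refine hasGradientAt_iInf_of_bounds (x₀ := x) (C := β / 2) (fun v y => ?_) fun v => ?_
  · rw [← add_sub_cancel x y, hx.leastSquares_add_add]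
    exact le_add_of_nonneg_right (leastSquares_nonneg hα hβ)
  · simpa only [add_zero, leastSquares_zero_right] using (hx.leastSquares_add_add v 0).le

end RegularizedLeastSquares

section FrobeniusSpace

variable {m n : Type*} {p q : ℕ}

/-- A matrix as a vector in the Euclidean space of its entries, whose real inner product and norm
are the Frobenius ones. -/
noncomputable def vectorize : Matrix m n ℂ →ₗ[ℝ] EuclideanSpace ℂ (m × n) where
  toFun A := WithLp.toLp 2 fun ij => A ij.1 ij.2
  map_add' _ _ := rfl
  map_smul' _ _ := rfl

@[simp]
lemma vectorize_apply (A : Matrix m n ℂ) (ij : m × n) : vectorize A ij = A ij.1 ij.2 := rfl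

lemma continuous_vectorize :
    Continuous (vectorize : Matrix m n ℂ → EuclideanSpace ℂ (m × n)) :=
  (PiLp.continuous_toLp 2 _).comp
    (continuous_pi fun ij => continuous_id.matrix_elem ij.1 ij.2)

lemma norm_sq_vectorize [Fintype m] [Fintype n] (A : Matrix m n ℂ) :
    ‖vectorize A‖ ^ 2 = ∑ i, ∑ j, ‖A i j‖ ^ 2 := by
  simp only [EuclideanSpace.norm_sq_eq, Fintype.sum_prod_type, vectorize_apply]

lemma norm_vectorize (A : Matrix (Fin p) (Fin q) ℂ) : ‖vectorize A‖ = frobNorm p q A := by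
  rw [frobNorm, ← norm_sq_vectorize, Real.sqrt_sq (norm_nonneg _)]

lemma inner_vectorize (A B : Matrix (Fin p) (Fin q) ℂ) :
    ⟪vectorize A, vectorize B⟫_ℝ = frobInner p q A B := by
  simp only [PiLp.inner_apply, Fintype.sum_prod_type, vectorize_apply, Complex.inner, frobInner,
    Complex.re_sum, mul_comm]

end FrobeniusSpace

section Operators

variable {p q n : ℕ} (hn : p + q = n + 1) (Ω : Finset (Fin n))

/-- `𝓗` as a real-linear map between Euclidean spaces. -/
noncomputable def hankelLin :
    EuclideanSpace ℂ (Fin n) →ₗ[ℝ] EuclideanSpace ℂ (Fin p × Fin q) where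
  toFun x := vectorize (hankel p q n hn x)
  map_add' _ _ := rfl
  map_smul' _ _ := rfl

/-- `𝓟_Ω` as a real-linear map between Euclidean spaces. -/
noncomputable def projOmegaLin : EuclideanSpace ℂ (Fin n) →ₗ[ℝ] EuclideanSpace ℂ (Fin n) where
  toFun x := WithLp.toLp 2 (projOmega n Ω x)
  map_add' x y := by ext a; by_cases ha : a ∈ Ω <;> simp [projOmega, ha]
  map_smul' c x := by ext a; by_cases ha : a ∈ Ω <;> simp [projOmega, ha]

lemma hankelAdj_sub (A B : Matrix (Fin p) (Fin q) ℂ) :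
    hankelAdj p q n (A - B) = hankelAdj p q n A - hankelAdj p q n B := by
  ext a
  simp only [hankelAdj, Pi.sub_apply, Matrix.sub_apply, ← Finset.sum_sub_distrib,
    ite_sub_ite, sub_zero]

lemma hankelAdj_hankel (x : Fin n → ℂ) (a : Fin n) :
    hankelAdj p q n (hankel p q n hn x) a = w p q a * x a := by
  have antidiagonal_entry (i : Fin p) (j : Fin q) :
      (if (i : ℕ) + j = a then hankel p q n hn x i j else 0) =
        if (i : ℕ) + j = a then x a else 0 :=
    if_ctx_congr Iff.rfl (fun h => congrArg x (Fin.ext h)) fun _ => rfl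
  simp only [hankelAdj, antidiagonal_entry, w]
  rw [← Fintype.sum_prod_type' fun (i : Fin p) (j : Fin q) => if (i : ℕ) + j = a then x a else 0,
    ← Finset.sum_filter, Finset.sum_const, nsmul_eq_mul]

lemma inner_vectorize_hankelLin (A : Matrix (Fin p) (Fin q) ℂ) (y : EuclideanSpace ℂ (Fin n)) :
    ⟪vectorize A, hankelLin hn y⟫_ℝ = ⟪WithLp.toLp 2 (hankelAdj p q n A), y⟫_ℝ := by
  have sum_antidiagonal (i : Fin p) (j : Fin q) :
      ∑ a : Fin n, ⟪if (i : ℕ) + j = a then A i j else 0, y a⟫_ℝ =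
        ⟪A i j, hankel p q n hn y i j⟫_ℝ := by
    rw [Fintype.sum_eq_single ⟨i + j, by omega⟩ fun a ha => ?_]
    · simp [hankel]
    · rw [if_neg fun h => ha (Fin.ext h.symm), inner_zero_left]
  simp only [PiLp.inner_apply, Fintype.sum_prod_type, hankelAdj, sum_inner]
  rw [Finset.sum_comm (s := (Finset.univ : Finset (Fin n)))]
  refine Finset.sum_congr rfl fun i _ => ?_
  rw [Finset.sum_comm]
  exact Finset.sum_congr rfl fun j _ => (sum_antidiagonal i j).symm

lemma inner_projOmegaLin_right (x y : EuclideanSpace ℂ (Fin n)) :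
    ⟪x, projOmegaLin Ω y⟫_ℝ = ⟪projOmegaLin Ω x, y⟫_ℝ := by
  simp only [PiLp.inner_apply]
  refine Finset.sum_congr rfl fun a _ => ?_
  by_cases ha : a ∈ Ω <;> simp [projOmegaLin, projOmega, ha]

lemma projOmegaLin_projOmegaLin (x : EuclideanSpace ℂ (Fin n)) :
    projOmegaLin Ω (projOmegaLin Ω x) = projOmegaLin Ω x := by
  ext a
  by_cases ha : a ∈ Ω <;> simp [projOmegaLin, projOmega, ha]

end Operators

section Minimizer

variable {p q n : ℕ} (hn : p + q = n + 1) {α β : ℝ} (Ω : Finset (Fin n)) (s : Fin n → ℂ)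
  (H : Matrix (Fin p) (Fin q) ℂ)

lemma hfun_eq_leastSquares (x : Fin n → ℂ) :
    hfun p q n hn α β Ω s H x =
      leastSquares (projOmegaLin Ω) (hankelLin hn) α β (WithLp.toLp 2 s) (vectorize H)
        (WithLp.toLp 2 x) := by
  have coupling_residual :
      vectorize H - hankelLin hn (WithLp.toLp 2 x) = vectorize (H - hankel p q n hn x) := rfl
  rw [leastSquares, coupling_residual, norm_sq_vectorize, EuclideanSpace.norm_sq_eq,
    EuclideanSpace.norm_sq_eq]
  rfl

lemma fobj_eq_iInf_leastSquares :
    fobj p q n hn α β Ω s H =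
      ⨅ x, leastSquares (projOmegaLin Ω) (hankelLin hn) α β (WithLp.toLp 2 s) (vectorize H) x :=
  (WithLp.equiv 2 (Fin n → ℂ)).symm.iInf_congr fun x => (hfun_eq_leastSquares hn Ω s H x).symm

variable (α β) in
/-- The minimizer `𝓛(𝓟_Ω s + β 𝓗* H)` of `h(H, ·)`. -/
noncomputable def minimizer : Fin n → ℂ :=
  Lop p q n α β Ω (projOmega n Ω s + β • hankelAdj p q n H)

lemma Lop_denominator_ne_zero (p q : ℕ) (hα : 0 < α) (hβ : 0 ≤ β) (a : Fin n) :
    (α : ℂ) + (if a ∈ Ω then 1 else 0) + (β : ℂ) * (w p q a : ℂ) ≠ 0 := by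
  have real_pos : 0 < α + (if a ∈ Ω then 1 else 0) + β * (w p q a : ℝ) := by positivity
  have complex_ne := Complex.ofReal_ne_zero.2 real_pos.ne'
  simpa only [Complex.ofReal_add, Complex.ofReal_mul, Complex.ofReal_natCast, apply_ite,
    Complex.ofReal_one, Complex.ofReal_zero] using complex_ne

lemma minimizer_normal_equation (hα : 0 < α) (hβ : 0 ≤ β) :
    α • minimizer α β Ω s H =
      projOmega n Ω s - projOmega n Ω (minimizer α β Ω s H) +
        β • hankelAdj p q n (H - hankel p q n hn (minimizer α β Ω s H)) := by
  ext a
  have cleared :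
      ((α : ℂ) + (if a ∈ Ω then 1 else 0) + (β : ℂ) * (w p q a : ℂ)) * minimizer α β Ω s H a =
        projOmega n Ω s a + β * hankelAdj p q n H a :=
    mul_div_cancel₀ _ (Lop_denominator_ne_zero Ω p q hα hβ a)
  have indicator_mul : projOmega n Ω (minimizer α β Ω s H) a =
      (if a ∈ Ω then 1 else 0) * minimizer α β Ω s H a := (boole_mul _ _).symm
  simp only [hankelAdj_sub, Pi.add_apply, Pi.sub_apply, Pi.smul_apply, hankelAdj_hankel,
    Complex.real_smul, indicator_mul]
  linear_combination cleared

lemma isLeastSquaresStationary_minimizer (hα : 0 < α) (hβ : 0 ≤ β) :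
    IsLeastSquaresStationary (projOmegaLin Ω) (hankelLin hn) α β (WithLp.toLp 2 s) (vectorize H)
      (WithLp.toLp 2 (minimizer α β Ω s H)) := by
  intro y
  set x := minimizer α β Ω s H
  calc α * ⟪WithLp.toLp 2 x, y⟫_ℝ
      = ⟪WithLp.toLp 2 (α • x), y⟫_ℝ := by rw [WithLp.toLp_smul, real_inner_smul_left]
    _ = ⟪projOmegaLin Ω (WithLp.toLp 2 s) - projOmegaLin Ω (WithLp.toLp 2 x), y⟫_ℝ +
          β * ⟪WithLp.toLp 2 (hankelAdj p q n (H - hankel p q n hn x)), y⟫_ℝ := by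
        rw [minimizer_normal_equation hn Ω s H hα hβ, WithLp.toLp_add, WithLp.toLp_smul,
          inner_add_left, real_inner_smul_left]
        rfl
    _ = ⟪WithLp.toLp 2 s - projOmegaLin Ω (WithLp.toLp 2 x), projOmegaLin Ω y⟫_ℝ +
          β * ⟪vectorize H - hankelLin hn (WithLp.toLp 2 x), hankelLin hn y⟫_ℝ := by
        rw [inner_projOmegaLin_right, map_sub, projOmegaLin_projOmegaLin,
          ← inner_vectorize_hankelLin hn, map_sub]
        rfl

lemma vectorize_Gmap :
    vectorize (Gmap p q n hn α β Ω s H) =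
      β • (vectorize H - hankelLin hn (WithLp.toLp 2 (minimizer α β Ω s H))) :=
  (smul_sub β (vectorize H) (hankelLin hn (WithLp.toLp 2 (minimizer α β Ω s H)))).symm

end Minimizer

/-- `f` is (real-)Fréchet differentiable at every `H`, with
gradient `G(H)` for the real inner product `Re tr(Aᴴ B)`:
`f(H+Δ) − f(H) − Re tr(G(H)ᴴ Δ) = o(‖Δ‖_F)` as `Δ → 0`. -/
theorem fobj_differentiable_gradient
    (p q n : ℕ) (hp : 0 < p) (hq : 0 < q) (hn : p + q = n + 1)
    (α β : ℝ) (hα : 0 < α) (hβ : 0 < β) (Ω : Finset (Fin n)) (s : Fin n → ℂ)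
    (H : Matrix (Fin p) (Fin q) ℂ) :
    (fun Δ : Matrix (Fin p) (Fin q) ℂ =>
        fobj p q n hn α β Ω s (H + Δ) - fobj p q n hn α β Ω s H
          - frobInner p q (Gmap p q n hn α β Ω s H) Δ)
      =o[nhds (0 : Matrix (Fin p) (Fin q) ℂ)]
        (fun Δ : Matrix (Fin p) (Fin q) ℂ => frobNorm p q Δ) := by
  have gradient := (isLeastSquaresStationary_minimizer hn Ω s H hα hβ.le).hasGradientAt_iInf
    hα.le hβ.le
  rw [← vectorize_Gmap, hasGradientAt_iff_isLittleO_nhds_zero] at gradient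
  have vectorize_tendsto : Filter.Tendsto vectorize (nhds (0 : Matrix (Fin p) (Fin q) ℂ))
      (nhds 0) := continuous_vectorize.tendsto' 0 0 (map_zero _)
  simpa only [Function.comp_def, ← map_add, ← fobj_eq_iInf_leastSquares, inner_vectorize,
    norm_vectorize] using (gradient.comp_tendsto vectorize_tendsto).norm_right

end LPPG
end

section
/- For every matrix A ∈ ℂ^{p×q}, the quadratic form of the operator 𝓗𝓛𝓗* satisfies 0 ≤ Re tr(Aᴴ · 𝓗(𝓛(𝓗*A))) ≤ (m/(α + βm)) · ‖A‖_F², where m := min(p, q). -/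
open scoped BigOperators

namespace LPPG

/-!
The quadratic form is `∑ a, |(𝓗*A)_a|² / d_a` with `d_a = α + χ_Ω(a) + β w_a`, because `𝓗*` is the
adjoint of `𝓗` and `𝓛` is diagonal. Since `(𝓗*A)_a` sums the `w_a` entries of the `a`-th
antidiagonal, Cauchy–Schwarz bounds `|(𝓗*A)_a|²` by `w_a` times the squared norm of that
antidiagonal. Finally `w_a / d_a ≤ w_a / (α + β w_a) ≤ m / (α + β m)`, as `t ↦ t / (α + β t)` is
increasing and `w_a ≤ m`, and the antidiagonals partition the entries of `A`.
-/

open scoped Matrix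

lemma norm_sum_sq_le_card_mul_sum_norm_sq {ι E : Type*} [SeminormedAddCommGroup E]
    (s : Finset ι) (f : ι → E) :
    ‖∑ i ∈ s, f i‖ ^ 2 ≤ s.card * ∑ i ∈ s, ‖f i‖ ^ 2 :=
  calc ‖∑ i ∈ s, f i‖ ^ 2 ≤ (∑ i ∈ s, ‖f i‖) ^ 2 := by gcongr; exact norm_sum_le s f
    _ ≤ s.card * ∑ i ∈ s, ‖f i‖ ^ 2 := sq_sum_le_card_mul_sum_sq

lemma div_add_mul_le_div_add_mul {K : Type*} [Field K] [LinearOrder K] [IsStrictOrderedRing K]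
    {α β s t : K} (hα : 0 < α) (hβ : 0 ≤ β) (hs : 0 ≤ s) (hst : s ≤ t) :
    s / (α + β * s) ≤ t / (α + β * t) := by
  have ht : 0 ≤ t := hs.trans hst
  rw [div_le_div_iff₀ (by positivity) (by positivity)]
  linarith [mul_le_mul_of_nonneg_right hst hα.le]

section Antidiagonal

/-- The positions `(i, j)` of a `p × q` matrix on the antidiagonal `i + j = a`. These are the
entries summed by `𝓗*` in coordinate `a`, and their number is `w p q a`. -/
def antidiag (p q a : ℕ) : Finset (Fin p × Fin q) :=
  Finset.univ.filter fun ij => (ij.1 : ℕ) + (ij.2 : ℕ) = a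

variable {p q n : ℕ}

lemma mem_antidiag {a : ℕ} {ij : Fin p × Fin q} :
    ij ∈ antidiag p q a ↔ (ij.1 : ℕ) + (ij.2 : ℕ) = a := by
  simp only [antidiag, Finset.mem_filter_univ]

lemma card_antidiag (p q a : ℕ) : (antidiag p q a).card = w p q a :=
  rfl

lemma injOn_fst_antidiag (p q a : ℕ) :
    Set.InjOn Prod.fst (antidiag p q a : Set (Fin p × Fin q)) := by
  intro x hx y hy hxy
  rw [Finset.mem_coe, mem_antidiag] at hx hy
  exact Prod.ext hxy (Fin.ext (by grind))

lemma injOn_snd_antidiag (p q a : ℕ) :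
    Set.InjOn Prod.snd (antidiag p q a : Set (Fin p × Fin q)) := by
  intro x hx y hy hxy
  rw [Finset.mem_coe, mem_antidiag] at hx hy
  exact Prod.ext (Fin.ext (by grind)) hxy

lemma w_le_min (p q a : ℕ) : w p q a ≤ min p q := by
  rw [← card_antidiag]
  refine le_min ?_ ?_
  · simpa using Finset.card_le_card_of_injOn (t := Finset.univ) Prod.fst
      (fun _ _ => Finset.mem_univ _) (injOn_fst_antidiag p q a)
  · simpa using Finset.card_le_card_of_injOn (t := Finset.univ) Prod.snd
      (fun _ _ => Finset.mem_univ _) (injOn_snd_antidiag p q a)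

lemma sum_sum_antidiag {M : Type*} [AddCommMonoid M] (hn : p + q = n + 1)
    (f : Fin p × Fin q → M) :
    ∑ a : Fin n, ∑ ij ∈ antidiag p q a, f ij = ∑ ij, f ij := by
  let index (ij : Fin p × Fin q) : Fin n := ⟨ij.1 + ij.2, by omega⟩
  simpa only [index, antidiag, Fin.ext_iff] using Finset.sum_fiberwise Finset.univ index f

end Antidiagonal

section Hankel

variable {p q n : ℕ}

lemma hankel_apply_of_mem_antidiag (hn : p + q = n + 1) (x : Fin n → ℂ) {a : Fin n}
    {ij : Fin p × Fin q} (h : ij ∈ antidiag p q a) : hankel p q n hn x ij.1 ij.2 = x a :=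
  congrArg x (Fin.ext (mem_antidiag.mp h))

lemma hankelAdj_eq_sum_antidiag (X : Matrix (Fin p) (Fin q) ℂ) (a : Fin n) :
    hankelAdj p q n X a = ∑ ij ∈ antidiag p q a, X ij.1 ij.2 := by
  rw [hankelAdj, antidiag, Finset.sum_filter, Fintype.sum_prod_type]

lemma frobInner_hankel (hn : p + q = n + 1) (A : Matrix (Fin p) (Fin q) ℂ) (x : Fin n → ℂ) :
    frobInner p q A (hankel p q n hn x) = (star (hankelAdj p q n A) ⬝ᵥ x).re := by
  rw [frobInner, ← Fintype.sum_prod_type', ← sum_sum_antidiag hn]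
  congr 1
  refine Finset.sum_congr rfl fun a _ => ?_
  rw [Pi.star_apply, hankelAdj_eq_sum_antidiag, star_sum, Finset.sum_mul]
  refine Finset.sum_congr rfl fun ij hij => ?_
  rw [hankel_apply_of_mem_antidiag hn x hij, starRingEnd_apply]

lemma norm_hankelAdj_sq_le (A : Matrix (Fin p) (Fin q) ℂ) (a : Fin n) :
    ‖hankelAdj p q n A a‖ ^ 2 ≤ w p q a * ∑ ij ∈ antidiag p q a, ‖A ij.1 ij.2‖ ^ 2 := by
  rw [hankelAdj_eq_sum_antidiag, ← card_antidiag]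
  exact norm_sum_sq_le_card_mul_sum_norm_sq _ _

end Hankel

section Lop

/-- The real denominator `α + χ_Ω(a) + β w_a` by which `𝓛` divides coordinate `a`. -/
noncomputable def lopDenom (p q : ℕ) {n : ℕ} (α β : ℝ) (Ω : Finset (Fin n)) (a : Fin n) : ℝ :=
  α + (if a ∈ Ω then 1 else 0) + β * w p q a

variable {p q n : ℕ} {α β : ℝ}

lemma Lop_apply (Ω : Finset (Fin n)) (x : Fin n → ℂ) (a : Fin n) :
    Lop p q n α β Ω x a = x a / (lopDenom p q α β Ω a : ℂ) := by
  simp only [Lop, lopDenom, Complex.ofReal_add, Complex.ofReal_mul, Complex.ofReal_natCast,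
    apply_ite Complex.ofReal, Complex.ofReal_one, Complex.ofReal_zero]

lemma re_star_dotProduct_Lop (Ω : Finset (Fin n)) (x : Fin n → ℂ) :
    (star x ⬝ᵥ Lop p q n α β Ω x).re = ∑ a, ‖x a‖ ^ 2 / lopDenom p q α β Ω a := by
  rw [dotProduct, Complex.re_sum]
  refine Finset.sum_congr rfl fun a _ => ?_
  rw [Lop_apply, Pi.star_apply, ← mul_div_assoc, ← starRingEnd_apply, Complex.conj_mul',
    ← Complex.ofReal_pow, ← Complex.ofReal_div, Complex.ofReal_re]

lemma add_mul_w_le_lopDenom (Ω : Finset (Fin n)) (a : Fin n) :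
    α + β * w p q a ≤ lopDenom p q α β Ω a := by
  unfold lopDenom
  split_ifs <;> linarith

lemma lopDenom_pos (hα : 0 < α) (hβ : 0 ≤ β) (Ω : Finset (Fin n)) (a : Fin n) :
    0 < lopDenom p q α β Ω a :=
  lt_of_lt_of_le (by positivity) (add_mul_w_le_lopDenom Ω a)

lemma w_div_lopDenom_le (hα : 0 < α) (hβ : 0 ≤ β) (Ω : Finset (Fin n)) (a : Fin n) :
    w p q a / lopDenom p q α β Ω a ≤ (min p q : ℝ) / (α + β * (min p q : ℝ)) :=
  calc w p q a / lopDenom p q α β Ω a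
      ≤ w p q a / (α + β * w p q a) := by
        gcongr
        exact add_mul_w_le_lopDenom Ω a
    _ ≤ (min p q : ℝ) / (α + β * (min p q : ℝ)) :=
        div_add_mul_le_div_add_mul hα hβ (Nat.cast_nonneg _) (mod_cast w_le_min p q a)

lemma norm_hankelAdj_sq_div_lopDenom_le (hα : 0 < α) (hβ : 0 ≤ β) (Ω : Finset (Fin n))
    (A : Matrix (Fin p) (Fin q) ℂ) (a : Fin n) :
    ‖hankelAdj p q n A a‖ ^ 2 / lopDenom p q α β Ω a ≤
      (min p q : ℝ) / (α + β * (min p q : ℝ)) * ∑ ij ∈ antidiag p q a, ‖A ij.1 ij.2‖ ^ 2 := by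
  have hd : 0 < lopDenom p q α β Ω a := lopDenom_pos hα hβ Ω a
  calc ‖hankelAdj p q n A a‖ ^ 2 / lopDenom p q α β Ω a
      ≤ w p q a * (∑ ij ∈ antidiag p q a, ‖A ij.1 ij.2‖ ^ 2) / lopDenom p q α β Ω a := by
        gcongr
        exact norm_hankelAdj_sq_le A a
    _ = w p q a / lopDenom p q α β Ω a * ∑ ij ∈ antidiag p q a, ‖A ij.1 ij.2‖ ^ 2 :=
        mul_div_right_comm _ _ _
    _ ≤ _ :=
        mul_le_mul_of_nonneg_right (w_div_lopDenom_le hα hβ Ω a) (by positivity)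

end Lop

/-- for every `A ∈ ℂ^{p×q}`,
`0 ≤ Re tr(Aᴴ 𝓗(𝓛(𝓗*A))) ≤ (m/(α + βm))‖A‖_F²` where `m = min(p,q)`. -/
theorem quadratic_form_HLHadj_bounds
    (p q n : ℕ) (hp : 0 < p) (hq : 0 < q) (hn : p + q = n + 1)
    (α β : ℝ) (hα : 0 < α) (hβ : 0 < β) (Ω : Finset (Fin n))
    (A : Matrix (Fin p) (Fin q) ℂ) :
    0 ≤ frobInner p q A (hankel p q n hn (Lop p q n α β Ω (hankelAdj p q n A))) ∧
    frobInner p q A (hankel p q n hn (Lop p q n α β Ω (hankelAdj p q n A)))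
      ≤ ((min p q : ℝ) / (α + β * (min p q : ℝ)))
          * ∑ i : Fin p, ∑ j : Fin q, ‖A i j‖ ^ 2 := by
  rw [frobInner_hankel, re_star_dotProduct_Lop]
  constructor
  · exact Finset.sum_nonneg fun a _ => div_nonneg (sq_nonneg _) (lopDenom_pos hα hβ.le Ω a).le
  · rw [← Fintype.sum_prod_type', ← sum_sum_antidiag hn, Finset.mul_sum]
    exact Finset.sum_le_sum fun a _ => norm_hankelAdj_sq_div_lopDenom_le hα hβ.le Ω A a

end LPPG
end

section
/- Let r ≤ min(p, q), let U ∈ ℂ^{p×r}, V ∈ ℂ^{q×r} have orthonormal columns, and let Σ* ∈ ℂ^{r×r} be the first component of the unique global minimizer of G(Σ, x) := (1/2)‖s − 𝓟_Ω x‖₂² + (β/2)‖UΣVᴴ − 𝓗x‖_F² + (α/2)‖x‖₂². Then the low-rank subspace projection step decreases f sufficiently: for every Σ ∈ ℂ^{r×r}, f(UΣ*Vᴴ) ≤ f(UΣVᴴ) − (αβ/(2(α + βm))) · ‖UΣ*Vᴴ − UΣVᴴ‖_F², where m := min(p, q). -/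
open scoped BigOperators

namespace LPPG

/-!
Completing squares shows that `h` is a quadratic function whose pure quadratic part is `h` with
`s = 0`. Since every entry of `x` occurs at most `m = min p q` times in `𝓗x`, one has
`‖𝓗x‖_F² ≤ m ‖x‖₂²`, and Cauchy–Schwarz gives
`‖H‖_F² ≤ (1/β + m/α) (β ‖H - 𝓗x‖_F² + α ‖x‖₂²)`. So `h` is jointly strongly convex in the
direction of `H`, with modulus `αβ/(α + βm)`, and this passes to the partial minimum `f`. A strongly
convex function grows quadratically away from its minimizer over a convex set, here the subspace of
all matrices `UΣVᴴ`.
-/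

section UniformConvexity

open Filter Topology

variable {E F : Type*} [NormedAddCommGroup E] [NormedSpace ℝ E] {s : Set E} {φ : ℝ → ℝ}

theorem add_modulus_le_of_isMinOn {f : E → ℝ} {x y : E} (hf : UniformConvexOn s φ f)
    (hx : x ∈ s) (hmin : IsMinOn f s x) (hy : y ∈ s) : f x + φ ‖x - y‖ ≤ f y := by
  have segment_bound : ∀ t ∈ Set.Ioo (0 : ℝ) 1, f x + (1 - t) * φ ‖x - y‖ ≤ f y := by
    rintro t ⟨ht0, ht1⟩
    have hmin_t : f x ≤ f ((1 - t) • x + t • y) :=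
      hmin (hf.1 hx hy (by linarith) ht0.le (by ring))
    have hconv := hf.2 hx hy (sub_nonneg.2 ht1.le) ht0.le (sub_add_cancel 1 t)
    simp only [smul_eq_mul] at hconv
    refine le_of_mul_le_mul_left ?_ ht0
    linarith
  have hlim : Tendsto (fun t : ℝ ↦ f x + (1 - t) * φ ‖x - y‖) (𝓝[>] 0)
      (𝓝 (f x + φ ‖x - y‖)) := by
    refine (Continuous.tendsto' ?_ 0 _ (by ring)).mono_left nhdsWithin_le_nhds
    fun_prop
  exact le_of_tendsto hlim (eventually_of_mem (Ioo_mem_nhdsGT one_pos) segment_bound)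

theorem uniformConvexOn_iInf [AddCommGroup F] [Module ℝ F] {h : E → F → ℝ} (hs : Convex ℝ s)
    (hbdd : ∀ x ∈ s, BddBelow (Set.range (h x)))
    (hh : ∀ x ∈ s, ∀ y ∈ s, ∀ u v : F, ∀ a b : ℝ, 0 ≤ a → 0 ≤ b → a + b = 1 →
      h (a • x + b • y) (a • u + b • v) ≤ a * h x u + b * h y v - a * b * φ ‖x - y‖) :
    UniformConvexOn s φ fun x ↦ ⨅ u, h x u := by
  refine ⟨hs, fun x hx y hy a b ha hb hab ↦ ?_⟩
  simp only [smul_eq_mul, Real.mul_iInf_of_nonneg ha, Real.mul_iInf_of_nonneg hb]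
  refine le_sub_iff_add_le.2 (le_ciInf_add_ciInf fun u v ↦ le_sub_iff_add_le.1 ?_)
  exact ciInf_le_of_le (hbdd _ (hs hx hy ha hb hab)) (a • u + b • v)
    (hh x hx y hy u v a b ha hb hab)

end UniformConvexity

theorem isMinOn_iInf_of_forall_le {X Y : Type*} {h : X → Y → ℝ} {s : Set X} {x : X} {u : Y}
    (hbdd : BddBelow (Set.range (h x))) (hmin : ∀ y ∈ s, ∀ v, h x u ≤ h y v) :
    IsMinOn (fun y ↦ ⨅ v, h y v) s x :=
  have : Nonempty Y := ⟨u⟩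
  fun y hy ↦ ciInf_le_of_le hbdd u (le_ciInf (hmin y hy))

theorem norm_sq_smul_add_smul {E : Type*} [NormedAddCommGroup E] [InnerProductSpace ℝ E] (x y : E)
    {a b : ℝ} (hab : a + b = 1) :
    ‖a • x + b • y‖ ^ 2 = a * ‖x‖ ^ 2 + b * ‖y‖ ^ 2 - a * b * ‖x - y‖ ^ 2 := by
  obtain rfl := eq_sub_of_add_eq hab
  simp only [norm_add_sq_real, norm_sub_sq_real, norm_smul, mul_pow, Real.norm_eq_abs, sq_abs,
    real_inner_smul_left, real_inner_smul_right]
  ring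

theorem mul_norm_sq_le_of_norm_sq_le_mul {E : Type*} [SeminormedAddCommGroup E] {α β m Y : ℝ}
    (hα : 0 < α) (hβ : 0 ≤ β) (hm : 0 ≤ m) (hY : 0 ≤ Y) (d : E) {b : E} (hb : ‖b‖ ^ 2 ≤ m * Y) :
    α * β / (α + β * m) * ‖d‖ ^ 2 ≤ β * ‖d - b‖ ^ 2 + α * Y := by
  have triangle : ‖d‖ ≤ ‖d - b‖ + ‖b‖ := norm_le_norm_sub_add d b
  set u := ‖d - b‖
  set v := ‖b‖
  have am_gm : 2 * (α * β * u * v) ≤ α ^ 2 * Y + β ^ 2 * m * u ^ 2 := by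
    refine two_mul_le_add_of_sq_le_mul (by positivity) (by positivity) ?_
    calc (α * β * u * v) ^ 2 = (α * β * u) ^ 2 * v ^ 2 := by ring
      _ ≤ (α * β * u) ^ 2 * (m * Y) := by gcongr
      _ = α ^ 2 * Y * (β ^ 2 * m * u ^ 2) := by ring
  rw [div_mul_eq_mul_div, div_le_iff₀ (by positivity)]
  calc α * β * ‖d‖ ^ 2 ≤ α * β * (u + v) ^ 2 := by gcongr
    _ = α * β * u ^ 2 + 2 * (α * β * u * v) + α * β * v ^ 2 := by ring
    _ ≤ α * β * u ^ 2 + (α ^ 2 * Y + β ^ 2 * m * u ^ 2) + α * β * (m * Y) := by gcongr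
    _ = (β * u ^ 2 + α * Y) * (α + β * m) := by ring

theorem sum_comp_le_sum_of_injective {ι κ M : Type*} [Fintype ι] [Fintype κ] [AddCommMonoid M]
    [PartialOrder M] [IsOrderedAddMonoid M] {g : ι → κ} (hg : Function.Injective g)
    {y : κ → M} (hy : 0 ≤ y) : ∑ i, y (g i) ≤ ∑ k, y k :=
  calc ∑ i, y (g i) = ∑ k ∈ Finset.univ.map ⟨g, hg⟩, y k := by simp
    _ ≤ ∑ k, y k := Finset.sum_le_univ_sum_of_nonneg hy

theorem convex_range_mul_mul {k l m n R : Type*} [Fintype l] [Fintype m] [Ring R] [Algebra ℝ R]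
    (A : Matrix k l R) (B : Matrix m n R) :
    Convex ℝ (Set.range fun S : Matrix l m R ↦ A * S * B) := by
  rintro _ ⟨S, rfl⟩ _ ⟨T, rfl⟩ a b - - -
  exact ⟨a • S + b • T, by simp [Matrix.mul_add, Matrix.add_mul]⟩

section Objective

open scoped Matrix.Norms.Frobenius

theorem frobenius_norm_sq {m n E : Type*} [Fintype m] [Fintype n] [SeminormedAddCommGroup E]
    (A : Matrix m n E) : ‖A‖ ^ 2 = ∑ i, ∑ j, ‖A i j‖ ^ 2 := by
  have hsum : 0 ≤ ∑ i, ∑ j, ‖A i j‖ ^ 2 := by positivity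
  simp only [Matrix.frobenius_norm_def, Real.rpow_two, ← Real.sqrt_eq_rpow, Real.sq_sqrt hsum]

theorem frobenius_norm_sq_smul_add_smul {m n E : Type*} [Fintype m] [Fintype n]
    [NormedAddCommGroup E] [InnerProductSpace ℝ E] (A B : Matrix m n E) {a b : ℝ}
    (hab : a + b = 1) :
    ‖a • A + b • B‖ ^ 2 = a * ‖A‖ ^ 2 + b * ‖B‖ ^ 2 - a * b * ‖A - B‖ ^ 2 := by
  simp only [frobenius_norm_sq, Finset.mul_sum, ← Finset.sum_add_distrib,
    ← Finset.sum_sub_distrib, Matrix.add_apply, Matrix.sub_apply, Matrix.smul_apply,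
    norm_sq_smul_add_smul _ _ hab]

variable {p q n : ℕ} (hn : p + q = n + 1) {α β : ℝ} (Ω : Finset (Fin n)) (s : Fin n → ℂ)

theorem hankel_smul_add_smul (x y : Fin n → ℂ) (a b : ℝ) :
    hankel p q n hn (a • x + b • y) = a • hankel p q n hn x + b • hankel p q n hn y :=
  rfl

theorem hankel_sub (x y : Fin n → ℂ) :
    hankel p q n hn (x - y) = hankel p q n hn x - hankel p q n hn y :=
  rfl

theorem projOmega_smul_add_smul (x y : Fin n → ℂ) (a b : ℝ) :
    projOmega n Ω (a • x + b • y) = a • projOmega n Ω x + b • projOmega n Ω y := by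
  ext i
  by_cases hi : i ∈ Ω <;> simp [projOmega, hi]

theorem projOmega_sub (x y : Fin n → ℂ) :
    projOmega n Ω (x - y) = projOmega n Ω x - projOmega n Ω y := by
  ext i
  by_cases hi : i ∈ Ω <;> simp [projOmega, hi]

theorem norm_sq_hankel_le (x : Fin n → ℂ) :
    ‖hankel p q n hn x‖ ^ 2 ≤ min (p : ℝ) q * ∑ a, ‖x a‖ ^ 2 := by
  have row_le (i : Fin p) : ∑ j, ‖hankel p q n hn x i j‖ ^ 2 ≤ ∑ a, ‖x a‖ ^ 2 :=
    sum_comp_le_sum_of_injective (g := fun j : Fin q ↦ (⟨i + j, by omega⟩ : Fin n))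
      (y := fun a ↦ ‖x a‖ ^ 2) (fun j k hjk ↦ by simpa [Fin.ext_iff] using hjk)
      fun a ↦ sq_nonneg _
  have col_le (j : Fin q) : ∑ i, ‖hankel p q n hn x i j‖ ^ 2 ≤ ∑ a, ‖x a‖ ^ 2 :=
    sum_comp_le_sum_of_injective (g := fun i : Fin p ↦ (⟨i + j, by omega⟩ : Fin n))
      (y := fun a ↦ ‖x a‖ ^ 2) (fun i k hik ↦ by simpa [Fin.ext_iff] using hik)
      fun a ↦ sq_nonneg _
  rw [min_mul_of_nonneg _ _ (by positivity), frobenius_norm_sq]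
  refine le_min ?_ ?_
  · simpa using Finset.sum_le_sum fun i (_ : i ∈ Finset.univ) ↦ row_le i
  · rw [Finset.sum_comm]
    simpa using Finset.sum_le_sum fun j (_ : j ∈ Finset.univ) ↦ col_le j

theorem hfun_eq_norm_sq (H : Matrix (Fin p) (Fin q) ℂ) (x : Fin n → ℂ) :
    hfun p q n hn α β Ω s H x =
      1 / 2 * ‖WithLp.toLp 2 (s - projOmega n Ω x)‖ ^ 2 + β / 2 * ‖H - hankel p q n hn x‖ ^ 2
        + α / 2 * ‖WithLp.toLp 2 x‖ ^ 2 := by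
  simp only [hfun, frobenius_norm_sq, PiLp.norm_sq_eq_of_L2, Pi.sub_apply]

theorem hfun_nonneg (hα : 0 ≤ α) (hβ : 0 ≤ β) (H : Matrix (Fin p) (Fin q) ℂ) (x : Fin n → ℂ) :
    0 ≤ hfun p q n hn α β Ω s H x := by
  unfold hfun
  positivity

theorem bddBelow_range_hfun (hα : 0 ≤ α) (hβ : 0 ≤ β) (H : Matrix (Fin p) (Fin q) ℂ) :
    BddBelow (Set.range (hfun p q n hn α β Ω s H)) :=
  ⟨0, Set.forall_mem_range.2 (hfun_nonneg hn Ω s hα hβ H)⟩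

theorem hfun_smul_add_smul (H K : Matrix (Fin p) (Fin q) ℂ) (x y : Fin n → ℂ) {a b : ℝ}
    (hab : a + b = 1) :
    hfun p q n hn α β Ω s (a • H + b • K) (a • x + b • y) =
      a * hfun p q n hn α β Ω s H x + b * hfun p q n hn α β Ω s K y
        - a * b * hfun p q n hn α β Ω 0 (H - K) (x - y) := by
  have residual_comb : s - projOmega n Ω (a • x + b • y) =
      a • (s - projOmega n Ω x) + b • (s - projOmega n Ω y) := by
    obtain rfl := eq_sub_of_add_eq hab
    rw [projOmega_smul_add_smul]
    module
  have residual_sub : (0 : Fin n → ℂ) - projOmega n Ω (x - y) =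
      (s - projOmega n Ω x) - (s - projOmega n Ω y) := by
    rw [projOmega_sub]
    abel
  have misfit_comb : a • H + b • K - hankel p q n hn (a • x + b • y) =
      a • (H - hankel p q n hn x) + b • (K - hankel p q n hn y) := by
    rw [hankel_smul_add_smul]
    module
  have misfit_sub : H - K - hankel p q n hn (x - y) =
      (H - hankel p q n hn x) - (K - hankel p q n hn y) := by
    rw [hankel_sub]
    abel
  simp only [hfun_eq_norm_sq, residual_comb, residual_sub, misfit_comb, misfit_sub,
    WithLp.toLp_add, WithLp.toLp_sub, WithLp.toLp_smul, norm_sq_smul_add_smul _ _ hab,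
    frobenius_norm_sq_smul_add_smul _ _ hab]
  ring

theorem mul_norm_sq_le_hfun_zero (hα : 0 < α) (hβ : 0 ≤ β) (H : Matrix (Fin p) (Fin q) ℂ)
    (x : Fin n → ℂ) :
    α * β / (α + β * min (p : ℝ) q) / 2 * ‖H‖ ^ 2 ≤ hfun p q n hn α β Ω 0 H x := by
  have coercive := mul_norm_sq_le_of_norm_sq_le_mul hα hβ (by positivity) (by positivity) H
    (norm_sq_hankel_le hn x)
  have sampling_nonneg : 0 ≤ ∑ a, ‖(0 : Fin n → ℂ) a - projOmega n Ω x a‖ ^ 2 := by positivity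
  rw [hfun, ← frobenius_norm_sq]
  linarith

theorem strongConvexOn_fobj (hα : 0 < α) (hβ : 0 ≤ β) {K : Set (Matrix (Fin p) (Fin q) ℂ)}
    (hK : Convex ℝ K) :
    StrongConvexOn K (α * β / (α + β * min (p : ℝ) q)) (fobj p q n hn α β Ω s) := by
  refine uniformConvexOn_iInf hK (fun H _ ↦ bddBelow_range_hfun hn Ω s hα.le hβ H) ?_
  intro H _ H' _ x y a b ha hb hab
  rw [hfun_smul_add_smul hn Ω s H H' x y hab]
  gcongr
  exact mul_norm_sq_le_hfun_zero hn Ω hα hβ (H - H') (x - y)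

theorem isMinOn_fobj (hα : 0 ≤ α) (hβ : 0 ≤ β) {K : Set (Matrix (Fin p) (Fin q) ℂ)}
    {Hstar : Matrix (Fin p) (Fin q) ℂ} {xdag : Fin n → ℂ}
    (hmin : ∀ H ∈ K, ∀ x, hfun p q n hn α β Ω s Hstar xdag ≤ hfun p q n hn α β Ω s H x) :
    IsMinOn (fobj p q n hn α β Ω s) K Hstar :=
  isMinOn_iInf_of_forall_le (bddBelow_range_hfun hn Ω s hα hβ Hstar) hmin

theorem subspace_projection_sufficient_decrease_general (hα : 0 < α) (hβ : 0 ≤ β)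
    {K : Set (Matrix (Fin p) (Fin q) ℂ)} (hK : Convex ℝ K) {Hstar H : Matrix (Fin p) (Fin q) ℂ}
    (hHstar : Hstar ∈ K) (hmin : IsMinOn (fobj p q n hn α β Ω s) K Hstar) (hH : H ∈ K) :
    fobj p q n hn α β Ω s Hstar
      ≤ fobj p q n hn α β Ω s H
        - (α * β / (2 * (α + β * (min p q : ℝ)))) * ∑ i, ∑ j, ‖(Hstar - H) i j‖ ^ 2 := by
  have growth := add_modulus_le_of_isMinOn (strongConvexOn_fobj hn Ω s hα hβ hK) hHstar hmin hH
  rw [← frobenius_norm_sq, mul_comm 2, ← div_div]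
  exact le_sub_iff_add_le.2 growth

end Objective

/-- sufficient decrease of the low-rank subspace projection
step: if `(Σ*, x†)` is the global minimizer of
`G(Σ,x) = h(UΣVᴴ, x)`, then for every `Σ`,
`f(UΣ*Vᴴ) ≤ f(UΣVᴴ) − (αβ/(2(α + βm)))‖UΣ*Vᴴ − UΣVᴴ‖_F²` with `m = min(p,q)`. -/
theorem subspace_projection_sufficient_decrease
    (p q n r : ℕ) (hp : 0 < p) (hq : 0 < q) (hn : p + q = n + 1)
    (hr : r ≤ min p q)
    (α β : ℝ) (hα : 0 < α) (hβ : 0 < β) (Ω : Finset (Fin n)) (s : Fin n → ℂ)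
    (U : Matrix (Fin p) (Fin r) ℂ) (V : Matrix (Fin q) (Fin r) ℂ)
    (hU : U.conjTranspose * U = 1) (hV : V.conjTranspose * V = 1)
    (Sstar : Matrix (Fin r) (Fin r) ℂ) (xdag : Fin n → ℂ)
    (hmin : ∀ (S : Matrix (Fin r) (Fin r) ℂ) (x : Fin n → ℂ),
        hfun p q n hn α β Ω s (U * Sstar * V.conjTranspose) xdag
          ≤ hfun p q n hn α β Ω s (U * S * V.conjTranspose) x) :
    ∀ S : Matrix (Fin r) (Fin r) ℂ,
      fobj p q n hn α β Ω s (U * Sstar * V.conjTranspose)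
        ≤ fobj p q n hn α β Ω s (U * S * V.conjTranspose)
          - (α * β / (2 * (α + β * (min p q : ℝ))))
            * ∑ i : Fin p, ∑ j : Fin q,
                ‖(U * Sstar * V.conjTranspose - U * S * V.conjTranspose) i j‖ ^ 2 :=
  fun S ↦ subspace_projection_sufficient_decrease_general hn Ω s hα hβ.le
    (convex_range_mul_mul U V.conjTranspose) ⟨Sstar, rfl⟩
    (isMinOn_fobj hn Ω s hα.le hβ.le (Set.forall_mem_range.2 hmin)) ⟨S, rfl⟩

end LPPG
end

section
/- Let E be a real inner product space, f : E → ℝ everywhere differentiable with gradient ∇f, and L ≥ 0 such that ‖∇f(u) − ∇f(v)‖ ≤ L‖u − v‖ for all u, v ∈ E. Let γ > 0, S ⊆ E, y ∈ S, and let x⁺ ∈ S minimize over S the proximal model u ↦ ⟨∇f(y), u − y⟩ + (1/(2γ))‖u − y‖². Then the proximal gradient step decreases f sufficiently: f(x⁺) ≤ f(y) − ((1/γ − L)/2) · ‖x⁺ − y‖². -/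
open scoped RealInnerProductSpace

namespace LPPG

open Set AffineMap

theorem le_quadratic_of_deriv_le_linear {φ φ' : ℝ → ℝ} {a b m K : ℝ} (hab : a ≤ b)
    (hφ : ∀ t ∈ Icc a b, HasDerivWithinAt φ (φ' t) (Icc a b) t)
    (hφ' : ∀ t ∈ Ico a b, φ' t ≤ m + K * (t - a)) :
    φ b ≤ φ a + m * (b - a) + K / 2 * (b - a) ^ 2 := by
  let B : ℝ → ℝ := fun t ↦ φ a + m * (t - a) + K / 2 * (t - a) ^ 2
  have hB (t : ℝ) : HasDerivAt B (m + K * (t - a)) t := by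
    have hsub : HasDerivAt (fun s ↦ s - a) 1 t := (hasDerivAt_id t).sub_const a
    have hlin := (hsub.const_mul m).const_add (φ a)
    have hsq := (hsub.pow 2).const_mul (K / 2)
    refine (hlin.add hsq).congr_deriv ?_
    simp only [Nat.cast_ofNat, Nat.add_one_sub_one, pow_one]
    ring
  have hφ_right : ∀ t ∈ Ico a b, HasDerivWithinAt φ (φ' t) (Ici t) t := fun t ht ↦
    (hφ t (Ico_subset_Icc_self ht)).mono_of_mem_nhdsWithin (Icc_mem_nhdsGE_of_mem ht)
  exact image_le_of_deriv_right_le_deriv_boundary (HasDerivWithinAt.continuousOn hφ) hφ_right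
    (by simp [B]) (HasDerivAt.continuousOn fun t _ ↦ hB t)
    (fun t _ ↦ (hB t).hasDerivWithinAt) hφ' (right_mem_Icc.2 hab)

section NormedSpace

variable {E : Type*} [NormedAddCommGroup E] [NormedSpace ℝ E]

theorem hasDerivWithinAt_comp_lineMap {F : Type*} [NormedAddCommGroup F] [NormedSpace ℝ F]
    {f : E → F} {f' : E →L[ℝ] F} {x y : E} {t : ℝ}
    (hf : HasFDerivWithinAt f f' (segment ℝ y x) (lineMap y x t)) :
    HasDerivWithinAt (f ∘ lineMap y x) (f' (x - y)) (Icc (0 : ℝ) 1) t :=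
  hf.comp_hasDerivWithinAt t hasDerivWithinAt_lineMap fun _ ↦ lineMap_mem_segment ℝ y x

variable {f : E → ℝ} {f' : E → E →L[ℝ] ℝ} {L : ℝ} {x y : E}

theorem fderiv_lineMap_apply_sub_le {t : ℝ} (ht : 0 ≤ t)
    (hLip : ‖f' (lineMap y x t) - f' y‖ ≤ L * ‖lineMap y x t - y‖) :
    f' (lineMap y x t) (x - y) ≤ f' y (x - y) + L * ‖x - y‖ ^ 2 * t := by
  have hdist : ‖lineMap y x t - y‖ = t * ‖x - y‖ := by
    rw [← dist_eq_norm, dist_lineMap_left, Real.norm_of_nonneg ht, dist_comm, dist_eq_norm]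
  have hdiff : (f' (lineMap y x t) - f' y) (x - y) ≤ L * ‖x - y‖ ^ 2 * t :=
    calc (f' (lineMap y x t) - f' y) (x - y)
        ≤ ‖f' (lineMap y x t) - f' y‖ * ‖x - y‖ :=
          (Real.le_norm_self _).trans (ContinuousLinearMap.le_opNorm _ _)
      _ ≤ L * ‖lineMap y x t - y‖ * ‖x - y‖ := by gcongr
      _ = L * ‖x - y‖ ^ 2 * t := by rw [hdist]; ring
  rw [sub_apply] at hdiff
  linarith

theorem le_add_fderiv_add_sq_of_lipschitz
    (hf : ∀ z ∈ segment ℝ y x, HasFDerivWithinAt f (f' z) (segment ℝ y x) z)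
    (hLip : ∀ z ∈ segment ℝ y x, ‖f' z - f' y‖ ≤ L * ‖z - y‖) :
    f x ≤ f y + f' y (x - y) + L / 2 * ‖x - y‖ ^ 2 := by
  have hquad := le_quadratic_of_deriv_le_linear zero_le_one
    (fun t ht ↦ hasDerivWithinAt_comp_lineMap (hf _ (lineMap_mem_segment ℝ y x ht)))
    (m := f' y (x - y)) (K := L * ‖x - y‖ ^ 2) fun t ht ↦ by
      simpa only [sub_zero] using
        fderiv_lineMap_apply_sub_le ht.1
          (hLip _ (lineMap_mem_segment ℝ y x (Ico_subset_Icc_self ht)))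
  simp only [Function.comp_apply, lineMap_apply_zero, lineMap_apply_one] at hquad
  linarith

/-- The curvature `c` of the proximal model plays the role of `1 / γ`. -/
theorem prox_grad_sufficient_decrease_general {c : ℝ} {S : Set E}
    (hf : ∀ z ∈ segment ℝ y x, HasFDerivWithinAt f (f' z) (segment ℝ y x) z)
    (hLip : ∀ z ∈ segment ℝ y x, ‖f' z - f' y‖ ≤ L * ‖z - y‖)
    (hy : y ∈ S) (hmin : IsMinOn (fun u ↦ f' y (u - y) + c / 2 * ‖u - y‖ ^ 2) S x) :
    f x ≤ f y - (c - L) / 2 * ‖x - y‖ ^ 2 := by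
  have hmodel : f' y (x - y) + c / 2 * ‖x - y‖ ^ 2 ≤ 0 := by
    simpa using isMinOn_iff.1 hmin y hy
  have hdescent := le_add_fderiv_add_sq_of_lipschitz hf hLip
  linarith

end NormedSpace

/-- sufficient decrease of the proximal gradient step:
if `f : E → ℝ` has gradient `g` everywhere (i.e. `HasFDerivAt f ⟪g x, ·⟫ x`),
`g` is `L`-Lipschitz, `γ > 0`, `y ∈ S`, and `x⁺ ∈ S` minimizes the proximal
model `u ↦ ⟪g y, u − y⟫ + (1/(2γ))‖u − y‖²` over `S`, then
`f(x⁺) ≤ f(y) − ((1/γ − L)/2)‖x⁺ − y‖²`. -/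
theorem prox_grad_sufficient_decrease
    {E : Type*} [NormedAddCommGroup E] [InnerProductSpace ℝ E]
    (f : E → ℝ) (g : E → E)
    (hf : ∀ x : E, HasFDerivAt f (innerSL ℝ (g x)) x)
    (L : ℝ) (hL : 0 ≤ L)
    (hLip : ∀ u v : E, ‖g u - g v‖ ≤ L * ‖u - v‖)
    (γ : ℝ) (hγ : 0 < γ)
    (S : Set E) (y : E) (hy : y ∈ S)
    (xp : E) (hxp : xp ∈ S)
    (hmin : ∀ u ∈ S,
        ⟪g y, xp - y⟫ + (1 / (2 * γ)) * ‖xp - y‖ ^ 2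
          ≤ ⟪g y, u - y⟫ + (1 / (2 * γ)) * ‖u - y‖ ^ 2) :
    f xp ≤ f y - ((1 / γ - L) / 2) * ‖xp - y‖ ^ 2 := by
  refine prox_grad_sufficient_decrease_general (fun z _ ↦ (hf z).hasFDerivWithinAt)
    (fun z _ ↦ ?_) hy (isMinOn_iff.2 fun u hu ↦ ?_)
  · simpa only [← map_sub, innerSL_apply_norm] using hLip z y
  · simpa only [innerSL_apply_apply, div_div, mul_comm γ] using hmin u hu

end LPPG
end

section
/- Let p₁, q₁, n₁ and p₂, q₂, n₂ be positive integers with p₁ + q₁ = n₁ + 1 and p₂ + q₂ = n₂ + 1, let r be a positive integer, and let b ∈ ℂ^r, z₁ ∈ ℂ^r, z₂ ∈ ℂ^r. Define the array x ∈ ℂ^{n₁×n₂} by x[i,j] = Σ_{k=1}^r b_k z₁ₖ^i z₂ₖ^j. Then the two-level Hankel matrix 𝓗x ∈ ℂ^{p₁p₂ × q₁q₂} has rank at most r. -/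
open scoped BigOperators

namespace LPPG

/-- The two-level Hankel matrix of an array `x ∈ ℂ^{n₁×n₂}`:
`[𝓗x]_{u,v} = x[u₁ + v₁, u₂ + v₂]` where `u = u₁ + u₂·p₁` (`0 ≤ u₁ < p₁`,
`0 ≤ u₂ < p₂`) and `v = v₁ + v₂·q₁` (`0 ≤ v₁ < q₁`, `0 ≤ v₂ < q₂`). -/
noncomputable def hankel2 (p₁ q₁ n₁ p₂ q₂ n₂ : ℕ)
    (hp₁ : 0 < p₁) (hq₁ : 0 < q₁)
    (h₁ : p₁ + q₁ = n₁ + 1) (h₂ : p₂ + q₂ = n₂ + 1)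
    (x : Fin n₁ → Fin n₂ → ℂ) : Matrix (Fin (p₁ * p₂)) (Fin (q₁ * q₂)) ℂ :=
  fun u v =>
    x ⟨u.1 % p₁ + v.1 % q₁, by
        have h1 := Nat.mod_lt u.1 hp₁
        have h2 := Nat.mod_lt v.1 hq₁
        omega⟩
      ⟨u.1 / p₁ + v.1 / q₁, by
        have h1 : u.1 / p₁ < p₂ := Nat.div_lt_of_lt_mul u.2
        have h2 : v.1 / q₁ < q₂ := Nat.div_lt_of_lt_mul v.2
        omega⟩

/-- The two-level Vandermonde matrix with nodes `(z₁ k, z₂ k)`, the outer factor in the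
decomposition of `hankel2`: its column `k` samples the exponential `(i, j) ↦ z₁ k ^ i * z₂ k ^ j`
on the `p₁ × p₂` grid. Rows are flattened as `u = i + j * p₁`, the convention of `hankel2`. -/
def vandermonde2 {κ R : Type*} [Monoid R] (p₁ p₂ : ℕ) (z₁ z₂ : κ → R) :
    Matrix (Fin (p₁ * p₂)) κ R :=
  Matrix.of fun u k => z₁ k ^ (u.1 % p₁) * z₂ k ^ (u.1 / p₁)

theorem vandermonde2_apply {κ R : Type*} [Monoid R] {p₁ p₂ : ℕ} (z₁ z₂ : κ → R)
    (u : Fin (p₁ * p₂)) (k : κ) :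
    vandermonde2 p₁ p₂ z₁ z₂ u k = z₁ k ^ (u.1 % p₁) * z₂ k ^ (u.1 / p₁) :=
  rfl

theorem hankel2_eq_vandermonde2_mul_diagonal_mul_transpose {κ : Type*} [Fintype κ] [DecidableEq κ]
    {p₁ q₁ n₁ p₂ q₂ n₂ : ℕ} (hp₁ : 0 < p₁) (hq₁ : 0 < q₁)
    (h₁ : p₁ + q₁ = n₁ + 1) (h₂ : p₂ + q₂ = n₂ + 1)
    {b z₁ z₂ : κ → ℂ} {x : Fin n₁ → Fin n₂ → ℂ}
    (hx : ∀ i j, x i j = ∑ k, b k * z₁ k ^ (i : ℕ) * z₂ k ^ (j : ℕ)) :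
    hankel2 p₁ q₁ n₁ p₂ q₂ n₂ hp₁ hq₁ h₁ h₂ x =
      vandermonde2 p₁ p₂ z₁ z₂ * Matrix.diagonal b * (vandermonde2 q₁ q₂ z₁ z₂).transpose := by
  ext u v
  rw [Matrix.mul_apply]
  simp only [hankel2, hx, Matrix.mul_diagonal, Matrix.transpose_apply, vandermonde2_apply, pow_add]
  exact Finset.sum_congr rfl fun k _ => by ring

/-- if `x[i,j] = Σ_{k=1}^r b_k z₁ₖ^i z₂ₖ^j`, then the
two-level Hankel matrix `𝓗x ∈ ℂ^{p₁p₂×q₁q₂}` has rank at most `r`. -/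
theorem hankel2_rank_le
    (p₁ q₁ n₁ p₂ q₂ n₂ r : ℕ)
    (hp₁ : 0 < p₁) (hq₁ : 0 < q₁) (hp₂ : 0 < p₂) (hq₂ : 0 < q₂) (hr : 0 < r)
    (h₁ : p₁ + q₁ = n₁ + 1) (h₂ : p₂ + q₂ = n₂ + 1)
    (b z₁ z₂ : Fin r → ℂ) (x : Fin n₁ → Fin n₂ → ℂ)
    (hx : ∀ (i : Fin n₁) (j : Fin n₂),
        x i j = ∑ k : Fin r, b k * z₁ k ^ (i : ℕ) * z₂ k ^ (j : ℕ)) :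
    (hankel2 p₁ q₁ n₁ p₂ q₂ n₂ hp₁ hq₁ h₁ h₂ x).rank ≤ r := by
  calc (hankel2 p₁ q₁ n₁ p₂ q₂ n₂ hp₁ hq₁ h₁ h₂ x).rank
      = (vandermonde2 p₁ p₂ z₁ z₂ * Matrix.diagonal b *
          (vandermonde2 q₁ q₂ z₁ z₂).transpose).rank := by
        rw [hankel2_eq_vandermonde2_mul_diagonal_mul_transpose hp₁ hq₁ h₁ h₂ hx]
    _ ≤ (vandermonde2 p₁ p₂ z₁ z₂ * Matrix.diagonal b).rank := Matrix.rank_mul_le_left _ _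
    _ ≤ r := Matrix.rank_le_width _

end LPPG
end
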